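/- Let K ≥ 1. Let gA, gB : Fin K → EuclideanSpace ℂ (Fin (2K)) be such that the combined family of 2K vectors is linearly independent over ℂ, and let hBA, hAB : Fin K → Fin K → ℂ be arbitrary direct channel gains. Then there exist beamforming vectors uA, uB : Fin K → EuclideanSpace ℂ (Fin (2K)) and nonzero constants cA, cB : Fin K → ℂ (cA p ≠ 0 and cB p ≠ 0 for all p) such that for all symbol vectors sA, sB : Fin K → ℂ, setting X_R = (∑_m sA m • uA m) + (∑_m sB m • uB m), for every p ∈ Fin K: (∑_m hBA m p · sB m) + ⟪gA p, X_R⟫ − ⟪gA p, uA p⟫ · sA p = cA p · sB p, and (∑_m hAB m p · sA m) + ⟪gB p, X_R⟫ − ⟪gB p, uB p⟫ · sB p = cB p · sA p. In words: after subtracting its self-interference, every one of the 2K receivers observes a nonzero scalar multiple of exactly its desired symbol, so all 2K symbols are delivered interference-free in a single channel use. -/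

import Mathlib

/-!
Each transmitted symbol reaches each receiver with effective gain (direct gain) + (relay gain), and
the relay gains `⟪g, u⟫` of a beamformer `u` may be prescribed freely at all `2K` receivers because
the vectors `g` are linearly independent (`exists_inner_eq`). So `u` is chosen to be invisible to
the receivers on the transmitter's own side, which see no direct signal from it either, and to
turn the direct gains on the other side into a Kronecker delta. Then all the constants equal `1`.
-/

open scoped ComplexInnerProductSpace BigOperators

/-- Inner products against a finite linearly independent family can be prescribed arbitrarily:
extend the prescribed values to a functional and represent it by Riesz. -/
theorem exists_inner_eq {ι E : Type*} [NormedAddCommGroup E] [InnerProductSpace ℂ E]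
    [FiniteDimensional ℂ E] {v : ι → E} (hv : LinearIndependent ℂ v) (c : ι → ℂ) :
    ∃ u : E, ∀ i, ⟪v i, u⟫ = c i := by
  have : CompleteSpace E := FiniteDimensional.complete ℂ E
  -- The inner product is conjugate-linear in `v i`, hence the conjugated values.
  obtain ⟨f, hf⟩ := LinearMap.exists_extend
    ((Module.Basis.span hv).constr ℂ fun i => starRingEnd ℂ (c i))
  refine ⟨(InnerProductSpace.toDual ℂ E).symm (LinearMap.toContinuousLinearMap f), fun i => ?_⟩
  have h := LinearMap.congr_fun hf (Module.Basis.span hv i)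
  rw [Module.Basis.constr_basis, LinearMap.comp_apply, Submodule.subtype_apply,
    Module.Basis.span_apply] at h
  rw [← inner_conj_symm, InnerProductSpace.toDual_symm_apply,
    LinearMap.coe_toContinuousLinearMap', h, Complex.conj_conj]

/-- Algebraic core of Theorem 2 (2K degrees of freedom in one shot): given linearly
independent relay channel vectors, there exist beamforming vectors and nonzero
constants such that, for every choice of symbols, each of the `2K` receivers —
after subtracting its self-interference — observes a nonzero scalar multiple of
exactly its desired symbol. -/
theorem stmt2 (K : ℕ) (hK : 1 ≤ K)
    (gA gB : Fin K → EuclideanSpace ℂ (Fin (2 * K)))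
    (hli : LinearIndependent ℂ (Sum.elim gA gB))
    (hBA hAB : Fin K → Fin K → ℂ) :
    ∃ (uA uB : Fin K → EuclideanSpace ℂ (Fin (2 * K))) (cA cB : Fin K → ℂ),
      (∀ p : Fin K, cA p ≠ 0) ∧ (∀ p : Fin K, cB p ≠ 0) ∧
      ∀ (sA sB : Fin K → ℂ) (p : Fin K),
        ((∑ m, hBA m p * sB m)
            + ⟪gA p, (∑ m, sA m • uA m) + (∑ m, sB m • uB m)⟫
            - ⟪gA p, uA p⟫ * sA p = cA p * sB p) ∧
        ((∑ m, hAB m p * sA m)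
            + ⟪gB p, (∑ m, sA m • uA m) + (∑ m, sB m • uB m)⟫
            - ⟪gB p, uB p⟫ * sB p = cB p * sA p) := by
  choose uA huA using fun m => exists_inner_eq hli
    (Sum.elim (fun _ => 0) fun p => (if m = p then 1 else 0) - hAB m p)
  choose uB huB using fun m => exists_inner_eq hli
    (Sum.elim (fun p => (if m = p then 1 else 0) - hBA m p) fun _ => 0)
  have hAA : ∀ m p, ⟪gA p, uA m⟫ = 0 := fun m p => huA m (Sum.inl p)
  have hBuA : ∀ m p, ⟪gB p, uA m⟫ = (if m = p then 1 else 0) - hAB m p :=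
    fun m p => huA m (Sum.inr p)
  have hAuB : ∀ m p, ⟪gA p, uB m⟫ = (if m = p then 1 else 0) - hBA m p :=
    fun m p => huB m (Sum.inl p)
  have hBB : ∀ m p, ⟪gB p, uB m⟫ = 0 := fun m p => huB m (Sum.inr p)
  refine ⟨uA, uB, fun _ => 1, fun _ => 1, fun _ => one_ne_zero, fun _ => one_ne_zero,
    fun sA sB p => ⟨?_, ?_⟩⟩
  · simp [hAA, hAuB, mul_sub,
      Finset.sum_sub_distrib, mul_comm]
  · simp [hBB, hBuA, mul_sub,
      Finset.sum_sub_distrib, mul_comm]
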